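/- With respect to the Frobenius inner product ⟨A,B⟩ = tr(AᵀB) on so(7), the orthogonal complement of the 14-dimensional subalgebra g₂ = {A ∈ so(7) : ρ₇(A)·s₅ = 0} is exactly m = span{G₁₆−G₃₇+G₂₅, G₁₅−G₂₆+G₄₇, G₁₇+G₃₆−G₄₅, G₂₇+G₃₅+G₄₆, G₁₂−G₃₄+G₅₆, G₁₃+G₂₄+G₆₇, G₁₄−G₂₃−G₅₇}; moreover, the linear map A ↦ ρ₇(A)·s₅ restricted to m is injective with image exactly (ℝs₅)^⊥ = span{s₁, s₂, s₃, s₄, s₆, s₇, s₈}. -/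

import Mathlib

/- STATEMENT 11: With respect to the Frobenius inner product on so(7), the
orthogonal complement of the 14-dimensional subalgebra
g₂ = {A ∈ so(7) : ρ₇(A)·s₅ = 0} is exactly the listed 7-dimensional m;
moreover A ↦ ρ₇(A)·s₅ restricted to m is injective with image exactly
(ℝs₅)^⊥ = span{s₁, s₂, s₃, s₄, s₆, s₇, s₈}.
(All indices 0-based: G a b = G_{a+1,b+1}, s 4 = s₅.) -/

open Matrix

namespace Stmt11

def E (i j : Fin 8) : Matrix (Fin 8) (Fin 8) ℝ :=
  Matrix.of fun k l => if k = i ∧ l = j then (-1 : ℝ) else if k = j ∧ l = i then 1 else 0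

def e : Fin 7 → Matrix (Fin 8) (Fin 8) ℝ :=
  ![E 0 7 + E 1 6 - E 2 5 - E 3 4,
    -E 0 6 + E 1 7 + E 2 4 - E 3 5,
    -E 0 5 + E 1 4 - E 2 7 + E 3 6,
    -E 0 4 - E 1 5 - E 2 6 - E 3 7,
    -E 0 2 - E 1 3 + E 4 6 + E 5 7,
    E 0 3 - E 1 2 - E 4 7 + E 5 6,
    E 0 1 - E 2 3 - E 4 5 + E 6 7]

def G (a b : Fin 7) : Matrix (Fin 7) (Fin 7) ℝ :=
  Matrix.of fun k l => if k = a ∧ l = b then (-1 : ℝ) else if k = b ∧ l = a then 1 else 0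

noncomputable def ρ₇ (A : Matrix (Fin 7) (Fin 7) ℝ) : Matrix (Fin 8) (Fin 8) ℝ :=
  (4⁻¹ : ℝ) • ∑ p, ∑ q, A q p • (e p * e q)

def s (i : Fin 8) : Fin 8 → ℝ := Pi.single i 1

/-- `m = g₂^⊥`, given by its seven spanning matrices. -/
def m : Submodule ℝ (Matrix (Fin 7) (Fin 7) ℝ) :=
  Submodule.span ℝ {G 0 5 - G 2 6 + G 1 4, G 0 4 - G 1 5 + G 3 6, G 0 6 + G 2 5 - G 3 4,
    G 1 6 + G 2 4 + G 3 5, G 0 1 - G 2 3 + G 4 5, G 0 2 + G 1 3 + G 5 6,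
    G 0 3 - G 1 2 - G 4 6}

/-!
Write `T A = ρ₇(A) s₅`. Expanding `eₚ e_q s₅` in the basis `s₁, …, s₈` shows that on `so(7)` the
coordinates of `T A` off `s₅` are, up to sign, `⟨g, A⟩ / 4` for the seven generators `g` of `m`, and
that the coordinate along `s₅` vanishes. Hence `m` is orthogonal to `ker T`, which makes `T`
injective on `m`. The generators are pairwise orthogonal of square norm `6`, so `T` sends them to
`± 3/2` times the basis vectors other than `s₅`, and `T m = s₅^⊥ ⊇ T so(7)`. Finally, if `A ∈ so(7)`
is orthogonal to `g₂`, choose `P ∈ m` with `T P = T A`: then `A - P` lies in `g₂` and is orthogonal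
to itself, so `A = P`.
-/

section AnisotropicForm

variable {R M N : Type*} [CommRing R] [AddCommGroup M] [Module R M] [AddCommGroup N] [Module R N]
  {β : LinearMap.BilinForm R M} {T : M →ₗ[R] N} {S U : Submodule R M}

lemma injOn_of_orthogonal_ker (hβ : ∀ x, β x x = 0 → x = 0)
    (hU : ∀ x ∈ U, ∀ y, T y = 0 → β x y = 0) : Set.InjOn T U := by
  intro x hx y hy hxy
  have hker : T (x - y) = 0 := by rw [map_sub, hxy, sub_self]
  exact sub_eq_zero.1 (hβ _ (hU _ (U.sub_mem hx hy) _ hker))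

lemma setOf_orthogonal_ker_eq (hβ : ∀ x, β x x = 0 → x = 0)
    (hU : ∀ x ∈ U, ∀ y, T y = 0 → β x y = 0) (hUS : U ≤ S) (hST : S.map T ≤ U.map T) :
    {x | x ∈ S ∧ ∀ y ∈ S, T y = 0 → β x y = 0} = (U : Set M) := by
  ext x
  refine ⟨fun ⟨hxS, hx⟩ => ?_, fun hxU => ⟨hUS hxU, fun y _ => hU x hxU y⟩⟩
  obtain ⟨u, huU, hu⟩ := hST (Submodule.mem_map_of_mem hxS)
  have hker : T (x - u) = 0 := by rw [map_sub, hu, sub_self]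
  have hself : β (x - u) (x - u) = 0 := by
    rw [LinearMap.BilinForm.sub_left, hx _ (S.sub_mem hxS (hUS huU)) hker, hU u huU _ hker,
      sub_self]
  rwa [sub_eq_zero.1 (hβ _ hself)]

end AnisotropicForm

/-- The Frobenius inner product `⟨A, B⟩ = tr (Aᵀ B)` as a bilinear form. -/
def frobeniusForm (R m n : Type*) [CommRing R] [Fintype m] [Fintype n] :
    LinearMap.BilinForm R (Matrix m n R) :=
  LinearMap.mk₂ R (fun A B => (Aᵀ * B).trace) (by simp [Matrix.add_mul])
    (by simp) (by simp [Matrix.mul_add]) (by simp)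

lemma frobeniusForm_apply {R m n : Type*} [CommRing R] [Fintype m] [Fintype n]
    (A B : Matrix m n R) : frobeniusForm R m n A B = (Aᵀ * B).trace :=
  rfl

lemma frobeniusForm_eq_sum {R ι κ : Type*} [CommRing R] [Fintype ι] [Fintype κ]
    (A B : Matrix ι κ R) : frobeniusForm R ι κ A B = ∑ p, ∑ q, A q p * B q p := by
  simp only [frobeniusForm_apply, trace, diag_apply, mul_apply, transpose_apply]

lemma eq_zero_of_frobeniusForm_self {m n : Type*} [Fintype m] [Fintype n] (A : Matrix m n ℝ)
    (h : frobeniusForm ℝ m n A A = 0) : A = 0 := by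
  rwa [frobeniusForm_apply, ← conjTranspose_eq_transpose_of_trivial,
    trace_conjTranspose_mul_self_eq_zero_iff] at h

open LieAlgebra.Orthogonal

attribute [local instance] LieRing.ofAssociativeRing

lemma G_eq_single_sub_single {a b : Fin 7} (h : a ≠ b) : G a b = single b a 1 - single a b 1 := by
  ext k l
  simp only [G, of_apply, Matrix.sub_apply, single_apply]
  grind

lemma G_mem_so {a b : Fin 7} (h : a ≠ b) : G a b ∈ so (Fin 7) ℝ := by
  simp [G_eq_single_sub_single h]

lemma frobeniusForm_G_G {a b c d : Fin 7} (hab : a < b) (hcd : c < d) :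
    frobeniusForm ℝ _ _ (G a b) (G c d) = if a = c ∧ b = d then 2 else 0 := by
  have hentries : frobeniusForm ℝ _ _ (G a b) (G c d) = G c d b a - G c d a b := by
    simp [frobeniusForm_apply, G_eq_single_sub_single hab.ne, trace_single_mul]
  rw [hentries]
  simp only [G, of_apply]
  grind

lemma E_mulVec_s {i j : Fin 8} (h : i ≠ j) (k : Fin 8) :
    E i j *ᵥ s k = (if k = i then s j else 0) - if k = j then s i else 0 := by
  ext l
  simp only [s, mulVec_single_one, E, col_apply, of_apply]
  split_ifs <;> simp_all [Pi.single_apply]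

/-- The generators of `m`, with signs fixed so that `⟨coordMatrix i, A⟩ / 4` is the coordinate of
`ρ₇(A) s₅` along the `i`-th vector of `s₁, s₂, s₃, s₄, s₆, s₇, s₈`. -/
def coordMatrix : Fin 7 → Matrix (Fin 7) (Fin 7) ℝ :=
  ![G 0 5 - G 2 6 + G 1 4, -(G 0 4 - G 1 5 + G 3 6), -(G 0 6 + G 2 5 - G 3 4),
    -(G 1 6 + G 2 4 + G 3 5), G 0 1 - G 2 3 + G 4 5, -(G 0 2 + G 1 3 + G 5 6),
    G 0 3 - G 1 2 - G 4 6]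

lemma span_range_coordMatrix : Submodule.span ℝ (Set.range coordMatrix) = m := by
  apply le_antisymm
  · rw [Submodule.span_le, Set.range_subset_iff]
    intro i
    fin_cases i <;> simp only [coordMatrix, m, SetLike.mem_coe, Fin.reduceFinMk, cons_val,
      Fin.zero_eta, Fin.mk_one, neg_mem_iff] <;> exact Submodule.subset_span (by simp)
  · have hmem (i : Fin 7) : coordMatrix i ∈ Submodule.span ℝ (Set.range coordMatrix) :=
      Submodule.subset_span (Set.mem_range_self i)
    simp only [m, Submodule.span_le, Set.insert_subset_iff, Set.singleton_subset_iff,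
      SetLike.mem_coe]
    exact ⟨hmem 0, neg_mem_iff.1 (hmem 1), neg_mem_iff.1 (hmem 2), neg_mem_iff.1 (hmem 3), hmem 4,
      neg_mem_iff.1 (hmem 5), hmem 6⟩

lemma coordMatrix_mem_so (i : Fin 7) : coordMatrix i ∈ so (Fin 7) ℝ := by
  fin_cases i <;> apply_rules [add_mem, sub_mem, neg_mem, G_mem_so] <;> decide

lemma frobeniusForm_coordMatrix (i j : Fin 7) :
    frobeniusForm ℝ _ _ (coordMatrix i) (coordMatrix j) = if i = j then 6 else 0 := by
  fin_cases i <;> fin_cases j <;> simp [coordMatrix, frobeniusForm_G_G] <;> norm_num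

lemma e_mulVec_s_four (q : Fin 7) :
    e q *ᵥ s 4 = ![s 3, -s 2, -s 1, s 0, s 6, -s 7, -s 5] q := by
  fin_cases q <;> simp [e, add_mulVec, sub_mulVec, neg_mulVec, E_mulVec_s]

set_option maxHeartbeats 1000000 in
-- 49 products of signed permutation matrices
lemma e_mul_e_mulVec_s_four (p q : Fin 7) :
    (e p * e q) *ᵥ s 4 =
      ∑ i, coordMatrix i q p • s (Fin.succAbove 4 i) -
        (1 : Matrix (Fin 7) (Fin 7) ℝ) q p • s 4 := by
  rw [← mulVec_mulVec, e_mulVec_s_four]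
  fin_cases p <;> fin_cases q <;>
    simp [e, add_mulVec, sub_mulVec, neg_mulVec, mulVec_neg, E_mulVec_s, Fin.sum_univ_seven,
      coordMatrix, G, Fin.succAbove]

/-- The linear map `A ↦ ρ₇(A) s₅`, whose kernel on `so(7)` is `g₂`. -/
noncomputable def spinorAction : Matrix (Fin 7) (Fin 7) ℝ →ₗ[ℝ] Fin 8 → ℝ where
  toFun A := ρ₇ A *ᵥ s 4
  map_add' A B := by
    simp only [ρ₇, Matrix.add_apply, add_smul, Finset.sum_add_distrib, smul_add, add_mulVec]
  map_smul' c A := by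
    simp only [ρ₇, Matrix.smul_apply, smul_eq_mul, mul_smul, ← Finset.smul_sum,
      smul_comm _ c, smul_mulVec, RingHom.id_apply]

lemma spinorAction_apply (A : Matrix (Fin 7) (Fin 7) ℝ) : spinorAction A = ρ₇ A *ᵥ s 4 :=
  rfl

lemma spinorAction_eq_sum (A : Matrix (Fin 7) (Fin 7) ℝ) :
    spinorAction A =
      ∑ i, (4⁻¹ * frobeniusForm ℝ _ _ (coordMatrix i) A) • s (Fin.succAbove 4 i) -
        (4⁻¹ * A.trace) • s 4 := by
  have htrace : A.trace = ∑ p, ∑ q, A q p * (1 : Matrix (Fin 7) (Fin 7) ℝ) q p := by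
    simp [trace, one_apply]
  calc spinorAction A
    _ = (4⁻¹ : ℝ) • ∑ p, ∑ q, A q p • ((e p * e q) *ᵥ s 4) := by
      simp only [spinorAction_apply, ρ₇, smul_mulVec, sum_mulVec]
    _ = (4⁻¹ : ℝ) • (∑ i, (∑ p, ∑ q, coordMatrix i q p * A q p) • s (Fin.succAbove 4 i) -
          A.trace • s 4) := by
      rw [htrace]
      simp only [e_mul_e_mulVec_s_four, smul_sub, Finset.smul_sum, smul_smul,
        Finset.sum_sub_distrib, Finset.sum_smul, mul_comm (A _ _)]
      exact congrArg (· - _)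
        ((Finset.sum_congr rfl fun _ _ => Finset.sum_comm).trans Finset.sum_comm)
    _ = _ := by
      simp only [frobeniusForm_eq_sum, smul_sub, Finset.smul_sum, smul_smul]

lemma spinorAction_apply_succAbove (A : Matrix (Fin 7) (Fin 7) ℝ) (i : Fin 7) :
    spinorAction A (Fin.succAbove 4 i) = 4⁻¹ * frobeniusForm ℝ _ _ (coordMatrix i) A := by
  simp [spinorAction_eq_sum, s, Pi.single_apply]

lemma frobeniusForm_eq_zero_of_mem_m {A B : Matrix (Fin 7) (Fin 7) ℝ} (hA : A ∈ m)
    (hB : spinorAction B = 0) : frobeniusForm ℝ _ _ A B = 0 := by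
  rw [← span_range_coordMatrix] at hA
  induction hA using Submodule.span_induction with
  | mem _ h =>
    obtain ⟨i, rfl⟩ := h
    simpa [hB] using (spinorAction_apply_succAbove B i).symm
  | zero => simp
  | add A₁ A₂ _ _ h₁ h₂ => rw [LinearMap.BilinForm.add_left, h₁, h₂, add_zero]
  | smul c A _ h => rw [LinearMap.BilinForm.smul_left, h, mul_zero]

lemma m_le_so : m ≤ (so (Fin 7) ℝ).toSubmodule := by
  rw [← span_range_coordMatrix, Submodule.span_le, Set.range_subset_iff]
  exact coordMatrix_mem_so

lemma trace_eq_zero_of_mem_so {R n : Type*} [CommRing R] [IsAddTorsionFree R] [Fintype n]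
    [DecidableEq n] {A : Matrix n n R} (hA : A ∈ so n R) : A.trace = 0 := by
  rw [← self_eq_neg, ← trace_neg, ← (mem_so n R A).1 hA, trace_transpose]

lemma spinorAction_coordMatrix (i : Fin 7) :
    spinorAction (coordMatrix i) = (3 / 2 : ℝ) • s (Fin.succAbove 4 i) := by
  simp only [spinorAction_eq_sum, frobeniusForm_coordMatrix,
    trace_eq_zero_of_mem_so (coordMatrix_mem_so i), mul_ite, ite_smul, mul_zero, zero_smul,
    Finset.sum_ite_eq', Finset.mem_univ, ↓reduceIte, sub_zero]
  norm_num

lemma map_spinorAction_m :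
    m.map spinorAction = Submodule.span ℝ (Set.range fun i => s (Fin.succAbove 4 i)) := by
  have hunit : IsUnit (3 / 2 : ℝ) := by norm_num
  rw [← span_range_coordMatrix, Submodule.map_span, ← Set.range_comp,
    ← Submodule.span_smul_eq_of_isUnit (Set.range fun i => s _) _ hunit, ← Set.range_smul]
  exact congrArg (Submodule.span ℝ) (congrArg Set.range (funext spinorAction_coordMatrix))

lemma map_spinorAction_so_le :
    (so (Fin 7) ℝ).toSubmodule.map spinorAction ≤ m.map spinorAction := by
  rw [map_spinorAction_m, Submodule.map_le_iff_le_comap]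
  intro A hA
  rw [Submodule.mem_comap, spinorAction_eq_sum, trace_eq_zero_of_mem_so hA, mul_zero, zero_smul,
    sub_zero]
  exact sum_mem fun i _ => Submodule.smul_mem _ _ (Submodule.subset_span ⟨i, rfl⟩)

lemma range_s_succAbove_four :
    (Set.range fun i => s (Fin.succAbove 4 i)) = {s 0, s 1, s 2, s 3, s 5, s 6, s 7} := by
  ext v
  simp [Fin.exists_fin_succ, Fin.succAbove, eq_comm]

theorem g2_complement_acts_isomorphically :
    {A : Matrix (Fin 7) (Fin 7) ℝ | Aᵀ = -A ∧
      ∀ B : Matrix (Fin 7) (Fin 7) ℝ, Bᵀ = -B → (ρ₇ B).mulVec (s 4) = 0 →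
        (Aᵀ * B).trace = 0} = ↑m ∧
    (∀ A ∈ m, ∀ B ∈ m, (ρ₇ A).mulVec (s 4) = (ρ₇ B).mulVec (s 4) → A = B) ∧
    (fun A => (ρ₇ A).mulVec (s 4)) '' ↑m =
      ↑(Submodule.span ℝ {s 0, s 1, s 2, s 3, s 5, s 6, s 7}) := by
  refine ⟨?_, ?_, ?_⟩
  · simpa only [frobeniusForm_apply, spinorAction_apply, mem_so,
      LieSubalgebra.mem_toSubmodule] using setOf_orthogonal_ker_eq eq_zero_of_frobeniusForm_self
      (fun _ hA _ => frobeniusForm_eq_zero_of_mem_m hA) m_le_so map_spinorAction_so_le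
  · intro A hA B hB
    exact injOn_of_orthogonal_ker eq_zero_of_frobeniusForm_self
      (fun _ hA _ => frobeniusForm_eq_zero_of_mem_m hA) hA hB
  · rw [← range_s_succAbove_four, ← map_spinorAction_m]
    rfl

end Stmt11
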